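/- Let ℓ ∈ ℂ with ℓ ≠ 0 and ℓ ≠ 1, and set g₁ = (x₁x₂)x₃ − (x₁x₃)x₂, g₂ = (x₁,x₂,x₃) − (x₂,x₁,x₃), g₃ = (x₁,x₂,x₃) − (x₁,x₃,x₂) − ℓ·[x₃,x₂]x₁ in ℂ⟨X⟩. Then this generating set of the T-ideal I = T-ideal(g₁,g₂,g₃) is minimal: for each k ∈ {1,2,3}, the polynomial g_k does not belong to the T-ideal generated by the other two polynomials. -/

import Mathlib

noncomputable section

/-- The free nonassociative non-unital `ℂ`-algebra `ℂ⟨X⟩` on the countably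
infinite set of free generators `X = {x₀, x₁, x₂, …}` indexed by `ℕ`. -/
abbrev FreeA : Type := FreeNonUnitalNonAssocAlgebra ℂ ℕ

/-- The free generator (variable) `xᵢ`. -/
def xv (i : ℕ) : FreeA := FreeNonUnitalNonAssocAlgebra.of ℂ i

/-- The set `Id(A)` of all polynomial identities of a (possibly nonassociative,
non-unital) `ℂ`-algebra `A`: those `f ∈ ℂ⟨X⟩` that vanish under every
substitution of elements of `A` for the variables. -/
def IdSet (A : Type) [NonUnitalNonAssocSemiring A] [Module ℂ A]
    [IsScalarTower ℂ A A] [SMulCommClass ℂ A A] : Set FreeA :=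
  {f | ∀ a : ℕ → A, FreeNonUnitalNonAssocAlgebra.lift ℂ a f = 0}

/-- A T-ideal: a two-sided ideal of `ℂ⟨X⟩` (closed under addition, scalar
multiples and multiplication by arbitrary elements on either side) that is
stable under all `ℂ`-algebra endomorphisms of `ℂ⟨X⟩`. -/
def IsTIdeal (I : Set FreeA) : Prop :=
  (0 : FreeA) ∈ I ∧
  (∀ f g : FreeA, f ∈ I → g ∈ I → f + g ∈ I) ∧
  (∀ (c : ℂ) (f : FreeA), f ∈ I → c • f ∈ I) ∧
  (∀ f g : FreeA, f ∈ I → f * g ∈ I) ∧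
  (∀ f g : FreeA, f ∈ I → g * f ∈ I) ∧
  (∀ (φ : FreeA →ₙₐ[ℂ] FreeA) (f : FreeA), f ∈ I → φ f ∈ I)

/-- The T-ideal generated by a set `S`: the smallest T-ideal containing `S`. -/
def TIdealGen (S : Set FreeA) : Set FreeA := ⋂₀ {I : Set FreeA | IsTIdeal I ∧ S ⊆ I}

/-- the commutator `[f, g] = fg - gf`. -/
def brk (f g : FreeA) : FreeA := f * g - g * f

/-- the associator `(f, g, h) = (fg)h - f(gh)`. -/
def assocP (f g h : FreeA) : FreeA := (f * g) * h - f * (g * h)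

/-!
The identities of an algebra `A` form a T-ideal, so `f ∉ TIdealGen S` follows once some `A`
satisfies every identity in `S` but not `f`. Two kinds of products suffice.

* `x * y = φ(x) y`, for a linear form `φ`, is associative with `(x * y) * z = (y * x) * z`, so it
  satisfies `g₂` and `g₃`; it violates `g₁` as soon as `φ` is nonzero with nonzero kernel.
* On `V × R × R`, let `(v, s, t) * (v', s', t') = (0, β(v, v'), γ(v) s')`. Then `(x * y) * z = 0`,
  which gives `g₁`, while `x * (y * z)` is essentially the trilinear form `γ(x) β(y, z)`: its
  symmetry in `x, y` amounts to `g₂`, and its symmetry in `y, z` to `g₃`.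
-/

/-- The polynomial `g₁`, whose identity is right commutativity. -/
def rightCommPoly : FreeA := (xv 1 * xv 2) * xv 3 - (xv 1 * xv 3) * xv 2

/-- The polynomial `g₂`, whose identity is left symmetry of the associator. -/
def leftSymmPoly : FreeA := assocP (xv 1) (xv 2) (xv 3) - assocP (xv 2) (xv 1) (xv 3)

/-- The polynomial `g₃`, whose identity is right symmetry of the associator up to a correction
proportional to the parameter `l`. -/
def twistedRightSymmPoly (l : ℂ) : FreeA :=
  assocP (xv 1) (xv 2) (xv 3) - assocP (xv 1) (xv 3) (xv 2) - l • (brk (xv 3) (xv 2) * xv 1)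

theorem forall_nat_fun_iff {A : Type*} {P : A → A → A → Prop} :
    (∀ a : ℕ → A, P (a 1) (a 2) (a 3)) ↔ ∀ x y z, P x y z :=
  ⟨fun h x y z => h fun | 1 => x | 2 => y | _ => z, fun h _ => h _ _ _⟩

open FreeNonUnitalNonAssocAlgebra (lift lift_comp_of lift_of_apply)

section Semiring

variable {A : Type} [NonUnitalNonAssocSemiring A] [Module ℂ A]
  [IsScalarTower ℂ A A] [SMulCommClass ℂ A A]

theorem lift_xv (a : ℕ → A) (i : ℕ) : lift ℂ a (xv i) = a i :=
  lift_of_apply ℂ a i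

variable (A) in
theorem isTIdeal_IdSet : IsTIdeal (IdSet A) := by
  refine ⟨fun a => map_zero _, fun f g hf hg a => ?_, fun c f hf a => ?_, fun f g hf a => ?_,
    fun f g hf a => ?_, fun φ f hf a => ?_⟩
  · rw [map_add, hf a, hg a, add_zero]
  · rw [map_smul, hf a, smul_zero]
  · rw [map_mul, hf a, zero_mul]
  · rw [map_mul, hf a, mul_zero]
  · let ψ := (lift ℂ a).comp φ
    calc lift ℂ a (φ f) = ψ f := rfl
      _ = lift ℂ (ψ ∘ xv) f := (DFunLike.congr_fun (lift_comp_of ℂ ψ) f).symm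
      _ = 0 := hf _

theorem notMem_TIdealGen_of_notMem_IdSet {S : Set FreeA} {f : FreeA}
    (hS : S ⊆ IdSet A) (hf : f ∉ IdSet A) : f ∉ TIdealGen S :=
  fun h => hf (h (IdSet A) ⟨isTIdeal_IdSet A, hS⟩)

end Semiring

section Ring

variable {A : Type} [NonUnitalNonAssocRing A] [Module ℂ A]
  [IsScalarTower ℂ A A] [SMulCommClass ℂ A A]

theorem lift_assocP (a : ℕ → A) (f g h : FreeA) :
    lift ℂ a (assocP f g h) = associator (lift ℂ a f) (lift ℂ a g) (lift ℂ a h) := by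
  simp only [assocP, associator_apply, map_sub, map_mul]

theorem lift_brk (a : ℕ → A) (f g : FreeA) :
    lift ℂ a (brk f g) = ⁅lift ℂ a f, lift ℂ a g⁆ := by
  simp only [brk, Ring.lie_def, map_sub, map_mul]

theorem rightCommPoly_mem_IdSet_iff :
    rightCommPoly ∈ IdSet A ↔ ∀ x y z : A, (x * y) * z = (x * z) * y := by
  simp only [IdSet, rightCommPoly, Set.mem_ofPred_eq, map_sub, map_mul, lift_xv, sub_eq_zero]
  exact forall_nat_fun_iff (P := fun x y z => (x * y) * z = (x * z) * y)

theorem leftSymmPoly_mem_IdSet_iff :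
    leftSymmPoly ∈ IdSet A ↔ ∀ x y z : A, associator x y z = associator y x z := by
  simp only [IdSet, leftSymmPoly, Set.mem_ofPred_eq, map_sub, lift_assocP, lift_xv, sub_eq_zero]
  exact forall_nat_fun_iff (P := fun x y z => associator x y z = associator y x z)

theorem twistedRightSymmPoly_mem_IdSet_iff {l : ℂ} :
    twistedRightSymmPoly l ∈ IdSet A ↔
      ∀ x y z : A, associator x y z - associator x z y = l • (⁅z, y⁆ * x) := by
  simp only [IdSet, twistedRightSymmPoly, Set.mem_ofPred_eq, map_sub, map_smul, map_mul,
    lift_assocP, lift_brk, lift_xv, sub_eq_zero]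
  exact forall_nat_fun_iff
    (P := fun x y z => associator x y z - associator x z y = l • (⁅z, y⁆ * x))

end Ring

/-- The module `M` as a nonassociative algebra with product the bilinear map `B`. It is a synonym
of `M`, so that elements of `M` can be used as elements of the algebra. -/
def BilinAlg {R M : Type*} [CommSemiring R] [AddCommGroup M] [Module R M]
    (_B : M →ₗ[R] M →ₗ[R] M) : Type _ := M

namespace BilinAlg

variable {R M : Type*} [CommSemiring R] [AddCommGroup M] [Module R M] (B : M →ₗ[R] M →ₗ[R] M)

instance : AddCommGroup (BilinAlg B) := inferInstanceAs (AddCommGroup M)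

instance : Module R (BilinAlg B) := inferInstanceAs (Module R M)

instance : NonUnitalNonAssocRing (BilinAlg B) where
  mul x y := B x y
  left_distrib x := (B x).map_add
  right_distrib := B.map_add₂
  zero_mul := B.map_zero₂
  mul_zero x := (B x).map_zero

instance : IsScalarTower R (BilinAlg B) (BilinAlg B) := ⟨B.map_smul₂⟩

instance : SMulCommClass R (BilinAlg B) (BilinAlg B) := ⟨fun r x y => ((B x).map_smul r y).symm⟩

end BilinAlg

section BilinAlgIdentities

variable {M : Type} [AddCommGroup M] [Module ℂ M] {B : M →ₗ[ℂ] M →ₗ[ℂ] M}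

theorem rightCommPoly_mem_IdSet_bilinAlg_iff :
    rightCommPoly ∈ IdSet (BilinAlg B) ↔ ∀ x y z, B (B x y) z = B (B x z) y :=
  rightCommPoly_mem_IdSet_iff

theorem leftSymmPoly_mem_IdSet_bilinAlg_iff :
    leftSymmPoly ∈ IdSet (BilinAlg B) ↔
      ∀ x y z, B (B x y) z - B x (B y z) = B (B y x) z - B y (B x z) :=
  leftSymmPoly_mem_IdSet_iff

theorem twistedRightSymmPoly_mem_IdSet_bilinAlg_iff {l : ℂ} :
    twistedRightSymmPoly l ∈ IdSet (BilinAlg B) ↔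
      ∀ x y z, B (B x y) z - B x (B y z) - (B (B x z) y - B x (B z y)) =
        l • B (B z y - B y z) x :=
  twistedRightSymmPoly_mem_IdSet_iff

end BilinAlgIdentities

section Products

variable {R V : Type*} [CommSemiring R] [AddCommMonoid V] [Module R V]

/-- The product `x * y = φ(x) y` attached to a linear form `φ`; it separates `g₁` from `g₂, g₃`. -/
def scalingMul (φ : V →ₗ[R] R) : V →ₗ[R] V →ₗ[R] V :=
  LinearMap.lsmul R V ∘ₗ φ

theorem scalingMul_apply (φ : V →ₗ[R] R) (x y : V) : scalingMul φ x y = φ x • y := rfl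

theorem scalingMul_assoc (φ : V →ₗ[R] R) (x y z : V) :
    scalingMul φ (scalingMul φ x y) z = scalingMul φ x (scalingMul φ y z) :=
  (scalingMul φ).map_smul₂ (φ x) y z

variable (γ : V →ₗ[R] R) (β : V →ₗ[R] V →ₗ[R] R)

/-- The product `(v, s, t) * (v', s', t') = (0, β(v, v'), γ(v) s')` on `V × R × R`; it separates
each of `g₂` and `g₃` from the other two polynomials, for suitable `γ` and `β`. -/
def nilpotentMul : (V × R × R) →ₗ[R] (V × R × R) →ₗ[R] (V × R × R) :=
  LinearMap.mk₂ R (fun x y => (0, β x.1 y.1, γ x.1 * y.2.1))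
    (fun _ _ _ => by simp [add_mul]) (fun _ _ _ => by simp [mul_assoc])
    (fun _ _ _ => by simp [mul_add]) (fun _ _ _ => by simp [mul_left_comm])

theorem nilpotentMul_nilpotentMul_left (x y z : V × R × R) :
    nilpotentMul γ β (nilpotentMul γ β x y) z = 0 := by
  simp [nilpotentMul]

theorem nilpotentMul_nilpotentMul_right (x y z : V × R × R) :
    nilpotentMul γ β x (nilpotentMul γ β y z) = (0, 0, γ x.1 * β y.1 z.1) := by
  simp [nilpotentMul]

end Products

section ScalingMulIdentities

variable {V : Type} [AddCommGroup V] [Module ℂ V] (φ : V →ₗ[ℂ] ℂ)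

theorem rightCommPoly_mem_IdSet_scalingMul_iff :
    rightCommPoly ∈ IdSet (BilinAlg (scalingMul φ)) ↔
      ∀ x y z, (φ x * φ y) • z = (φ x * φ z) • y := by
  simp only [rightCommPoly_mem_IdSet_bilinAlg_iff, scalingMul_apply, map_smul,
    LinearMap.smul_apply, mul_smul]

theorem leftSymmPoly_mem_IdSet_scalingMul : leftSymmPoly ∈ IdSet (BilinAlg (scalingMul φ)) := by
  simp only [leftSymmPoly_mem_IdSet_bilinAlg_iff, scalingMul_assoc, sub_self, implies_true]

theorem twistedRightSymmPoly_mem_IdSet_scalingMul (l : ℂ) :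
    twistedRightSymmPoly l ∈ IdSet (BilinAlg (scalingMul φ)) := by
  refine twistedRightSymmPoly_mem_IdSet_bilinAlg_iff.2 fun x y z => ?_
  have commutator_mem_ker : φ (scalingMul φ z y - scalingMul φ y z) = 0 := by
    simp only [scalingMul_apply, map_sub, map_smul, smul_eq_mul, mul_comm, sub_self]
  rw [scalingMul_apply φ (_ - _), commutator_mem_ker]
  simp only [scalingMul_assoc, sub_self, zero_smul, smul_zero]

end ScalingMulIdentities

section NilpotentMulIdentities

variable {V : Type} [AddCommGroup V] [Module ℂ V] (γ : V →ₗ[ℂ] ℂ) (β : V →ₗ[ℂ] V →ₗ[ℂ] ℂ)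

theorem rightCommPoly_mem_IdSet_nilpotentMul :
    rightCommPoly ∈ IdSet (BilinAlg (nilpotentMul γ β)) := by
  simp only [rightCommPoly_mem_IdSet_bilinAlg_iff, nilpotentMul_nilpotentMul_left, implies_true]

theorem leftSymmPoly_mem_IdSet_nilpotentMul_iff :
    leftSymmPoly ∈ IdSet (BilinAlg (nilpotentMul γ β)) ↔
      ∀ x y z, γ x * β y z = γ y * β x z := by
  simp [leftSymmPoly_mem_IdSet_bilinAlg_iff, nilpotentMul_nilpotentMul_left,
    nilpotentMul_nilpotentMul_right]

theorem twistedRightSymmPoly_mem_IdSet_nilpotentMul_iff (l : ℂ) :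
    twistedRightSymmPoly l ∈ IdSet (BilinAlg (nilpotentMul γ β)) ↔
      ∀ x y z, γ x * β y z = γ x * β z y := by
  simp [twistedRightSymmPoly_mem_IdSet_bilinAlg_iff, nilpotentMul_nilpotentMul_left,
    nilpotentMul_nilpotentMul_right, neg_add_eq_zero]

end NilpotentMulIdentities

theorem rightCommPoly_notMem_TIdealGen (l : ℂ) :
    rightCommPoly ∉ TIdealGen {leftSymmPoly, twistedRightSymmPoly l} := by
  let φ := LinearMap.fst ℂ ℂ ℂ
  refine notMem_TIdealGen_of_notMem_IdSet (A := BilinAlg (scalingMul φ)) ?_ fun h => ?_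
  · exact Set.pair_subset (leftSymmPoly_mem_IdSet_scalingMul φ)
      (twistedRightSymmPoly_mem_IdSet_scalingMul φ l)
  · simpa [φ] using (rightCommPoly_mem_IdSet_scalingMul_iff φ).1 h (1, 0) (1, 0) (0, 1)

theorem leftSymmPoly_notMem_TIdealGen (l : ℂ) :
    leftSymmPoly ∉ TIdealGen {rightCommPoly, twistedRightSymmPoly l} := by
  let γ := LinearMap.snd ℂ ℂ ℂ
  let β := (LinearMap.mul ℂ ℂ).compl₁₂ (LinearMap.fst ℂ ℂ ℂ) (LinearMap.fst ℂ ℂ ℂ)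
  refine notMem_TIdealGen_of_notMem_IdSet (A := BilinAlg (nilpotentMul γ β)) ?_ fun h => ?_
  · refine Set.pair_subset (rightCommPoly_mem_IdSet_nilpotentMul γ β) ?_
    refine (twistedRightSymmPoly_mem_IdSet_nilpotentMul_iff γ β l).2 fun x y z => ?_
    exact congrArg (γ x * ·) (mul_comm y.1 z.1)
  · simpa [γ, β] using (leftSymmPoly_mem_IdSet_nilpotentMul_iff γ β).1 h (0, 1) (1, 0) (1, 0)

theorem twistedRightSymmPoly_notMem_TIdealGen (l : ℂ) :
    twistedRightSymmPoly l ∉ TIdealGen {rightCommPoly, leftSymmPoly} := by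
  let γ := LinearMap.fst ℂ ℂ ℂ
  let β := (LinearMap.mul ℂ ℂ).compl₁₂ (LinearMap.fst ℂ ℂ ℂ) (LinearMap.snd ℂ ℂ ℂ)
  refine notMem_TIdealGen_of_notMem_IdSet (A := BilinAlg (nilpotentMul γ β)) ?_ fun h => ?_
  · refine Set.pair_subset (rightCommPoly_mem_IdSet_nilpotentMul γ β) ?_
    refine (leftSymmPoly_mem_IdSet_nilpotentMul_iff γ β).2 fun x y z => ?_
    exact mul_left_comm x.1 y.1 z.2
  · simpa [γ, β] using
      (twistedRightSymmPoly_mem_IdSet_nilpotentMul_iff γ β l).1 h (1, 0) (1, 0) (0, 1)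

theorem N6_generators_minimal_general (l : ℂ) :
    rightCommPoly ∉ TIdealGen {leftSymmPoly, twistedRightSymmPoly l} ∧
    leftSymmPoly ∉ TIdealGen {rightCommPoly, twistedRightSymmPoly l} ∧
    twistedRightSymmPoly l ∉ TIdealGen {rightCommPoly, leftSymmPoly} :=
  ⟨rightCommPoly_notMem_TIdealGen l, leftSymmPoly_notMem_TIdealGen l,
    twistedRightSymmPoly_notMem_TIdealGen l⟩

/-- For every `ℓ ∈ ℂ \\ {0, 1}`, the generating set `g₁, g₂, g₃` of the
T-ideal of identities of `𝐍₆^ℓ` is minimal: none of the three polynomials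
belongs to the T-ideal generated by the other two. -/
theorem N6_generators_minimal (l : ℂ) (h0 : l ≠ 0) (h1 : l ≠ 1) :
    (xv 1 * xv 2) * xv 3 - (xv 1 * xv 3) * xv 2 ∉
      TIdealGen
        { assocP (xv 1) (xv 2) (xv 3) - assocP (xv 2) (xv 1) (xv 3),
          assocP (xv 1) (xv 2) (xv 3) - assocP (xv 1) (xv 3) (xv 2) -
            l • (brk (xv 3) (xv 2) * xv 1) } ∧
    assocP (xv 1) (xv 2) (xv 3) - assocP (xv 2) (xv 1) (xv 3) ∉
      TIdealGen
        { (xv 1 * xv 2) * xv 3 - (xv 1 * xv 3) * xv 2,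
          assocP (xv 1) (xv 2) (xv 3) - assocP (xv 1) (xv 3) (xv 2) -
            l • (brk (xv 3) (xv 2) * xv 1) } ∧
    assocP (xv 1) (xv 2) (xv 3) - assocP (xv 1) (xv 3) (xv 2) -
        l • (brk (xv 3) (xv 2) * xv 1) ∉
      TIdealGen
        { (xv 1 * xv 2) * xv 3 - (xv 1 * xv 3) * xv 2,
          assocP (xv 1) (xv 2) (xv 3) - assocP (xv 2) (xv 1) (xv 3) } :=
  N6_generators_minimal_general l
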